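/- Let G be a balanced complete bipartite graph whose edges are coloured red and blue by a proper split colouring. Then V(G) can be partitioned into the vertex sets of three pairwise vertex-disjoint monochromatic paths, and also into the vertex sets of three pairwise vertex-disjoint monochromatic cycles. -/

import Mathlib

open SimpleGraph Set

/- Convention: colour `true` is red, colour `false` is blue. -/

/-- The subgraph of `G` consisting of the edges of colour `b`. -/
def monoSubgraph {V : Type*} (G : SimpleGraph V) (c : Sym2 V → Bool) (b : Bool) :
    SimpleGraph V :=
  SimpleGraph.fromEdgeSet {e | e ∈ G.edgeSet ∧ c e = b}

/-- `S` is the vertex set of a (possibly empty, possibly trivial) path of `G`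
all of whose edges have colour `b`. -/
def IsMonoPathSet {V : Type*} (G : SimpleGraph V) (c : Sym2 V → Bool) (b : Bool)
    (S : Set V) : Prop :=
  S = ∅ ∨ ∃ (u v : V) (p : G.Walk u v), p.IsPath ∧ (∀ e ∈ p.edges, c e = b) ∧
    S = {x | x ∈ p.support}

/-- `S` is the vertex set of a (possibly degenerate: empty, single vertex or single edge)
cycle of `G` all of whose edges have colour `b`. -/
def IsMonoCycleSet {V : Type*} (G : SimpleGraph V) (c : Sym2 V → Bool) (b : Bool)
    (S : Set V) : Prop :=
  S = ∅ ∨ (∃ v, S = {v}) ∨ (∃ u v, G.Adj u v ∧ c s(u, v) = b ∧ S = {u, v}) ∨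
    ∃ (v : V) (p : G.Walk v v), p.IsCycle ∧ (∀ e ∈ p.edges, c e = b) ∧
      S = {x | x ∈ p.support}

/-- `M` is a matching of `G` in colour `b` which is connected, i.e. all its edges lie in one
connected component of the subgraph formed by the edges of colour `b`. -/
def IsConnMatching {V : Type*} (G : SimpleGraph V) (c : Sym2 V → Bool) (b : Bool)
    (M : Set (Sym2 V)) : Prop :=
  (∀ e ∈ M, e ∈ G.edgeSet ∧ c e = b) ∧
  (∀ e ∈ M, ∀ f ∈ M, e ≠ f → ∀ x, x ∈ e → x ∉ f) ∧
  (∀ e ∈ M, ∀ f ∈ M, ∀ x, x ∈ e → ∀ y, y ∈ f → (monoSubgraph G c b).Reachable x y)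

/-- The set of vertices covered by a set of edges. -/
def matchSupport {V : Type*} (M : Set (Sym2 V)) : Set V := {x | ∃ e ∈ M, x ∈ e}

/-- The colouring `c` of the (bipartite, with classes `U` and `W`) graph `G` is a split
colouring: `U = A ∪ B`, `W = C ∪ D`, the edges between `A,C` and between `B,D` are blue
(`false`), and the edges between `A,D` and between `B,C` are red (`true`). -/
def IsSplitColouring {V : Type*} (G : SimpleGraph V) (c : Sym2 V → Bool)
    (U W : Set V) : Prop :=
  ∃ A B C D : Set V,
    A ∪ B = U ∧ Disjoint A B ∧ C ∪ D = W ∧ Disjoint C D ∧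
    (∀ u v, G.Adj u v →
      (((u ∈ A ∧ v ∈ C) ∨ (u ∈ C ∧ v ∈ A) ∨ (u ∈ B ∧ v ∈ D) ∨ (u ∈ D ∧ v ∈ B)) →
        c s(u, v) = false)) ∧
    (∀ u v, G.Adj u v →
      (((u ∈ A ∧ v ∈ D) ∨ (u ∈ D ∧ v ∈ A) ∨ (u ∈ B ∧ v ∈ C) ∨ (u ∈ C ∧ v ∈ B)) →
        c s(u, v) = true))

/-- The colouring `c` of `G` is `δ`-close to a split colouring: one can delete at most
`δ|E(G)|` edges so that the remaining graph is bipartite and the colouring on it is a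
split colouring. -/
def CloseToSplit {V : Type*} (G : SimpleGraph V) (c : Sym2 V → Bool) (δ : ℝ) : Prop :=
  ∃ F : Set (Sym2 V), F ⊆ G.edgeSet ∧ (F.ncard : ℝ) ≤ δ * (G.edgeSet.ncard : ℝ) ∧
    ∃ U W : Set V, U ∪ W = Set.univ ∧ Disjoint U W ∧
      (∀ u v, (G.deleteEdges F).Adj u v → ((u ∈ U ∧ v ∈ W) ∨ (u ∈ W ∧ v ∈ U))) ∧
      IsSplitColouring (G.deleteEdges F) c U W

theorem aux_path {V : Type*} [Fintype V] (G : SimpleGraph V) (c : Sym2 V → Bool) (b : Bool)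
    (n : ℕ) : ∀ X Y : Set V, X.ncard = n + 1 → Y.ncard = n + 1 →
      (∀ x ∈ X, ∀ y ∈ Y, G.Adj x y ∧ c s(x, y) = b) → ∀ x ∈ X, ∀ y ∈ Y,
      ∃ p : G.Walk x y, p.IsPath ∧ (∀ e ∈ p.edges, c e = b) ∧
        (∀ z, z ∈ p.support ↔ z ∈ X ∪ Y) ∧ (n ≠ 0 → s(x, y) ∉ p.edges) := by
  induction n with
  | zero =>
    intro X Y hX hY h x hx y hy
    obtain ⟨x', rfl⟩ := Set.ncard_eq_one.1 hX
    obtain ⟨y', rfl⟩ := Set.ncard_eq_one.1 hY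
    obtain rfl : x = x' := hx
    obtain rfl : y = y' := hy
    obtain ⟨h1, h2⟩ := h x rfl y rfl
    refine ⟨Walk.cons h1 Walk.nil, ?_, ?_, ?_, ?_⟩
    · simp [h1.ne]
    · simp [h2]
    · intro z; simp [or_comm]
    · simp
  | succ n ih =>
    intro X Y hX hY h x hx y hy
    have hX' : (X \ {x}).ncard = n + 1 := by rw [Set.ncard_diff_singleton_of_mem hx]; omega
    have hY' : (Y \ {y}).ncard = n + 1 := by rw [Set.ncard_diff_singleton_of_mem hy]; omega
    obtain ⟨x', hx'⟩ : (X \ {x}).Nonempty := Set.nonempty_of_ncard_ne_zero (by omega)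
    obtain ⟨y', hy'⟩ : (Y \ {y}).Nonempty := Set.nonempty_of_ncard_ne_zero (by omega)
    obtain ⟨p, hp, hc, hs, -⟩ := ih _ _ hX' hY' (fun u hu v hv => h u hu.1 v hv.1) x' hx' y' hy'
    obtain ⟨a1, a2⟩ := h x hx y' hy'.1
    obtain ⟨b1, b2⟩ := h x' hx'.1 y hy
    have hxy := (h x hx y hy).1.ne
    have hxY : x ∉ Y := fun hh => (h x hx x hh).1.ne rfl
    have hyX : y ∉ X := fun hh => (h y hh y hy).1.ne rfl
    have hxp : x ∉ p.support := by rw [hs]; simp [hxY]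
    have hyp : y ∉ p.support := by rw [hs]; simp [hyX]
    refine ⟨Walk.cons a1 (p.reverse.concat b1), ?_, ?_, ?_, ?_⟩
    · rw [Walk.cons_isPath_iff]
      refine ⟨hp.reverse.concat (by simpa using hyp) b1, ?_⟩
      simp [Walk.support_concat, hxp, hxy]
    · intro e he
      simp only [Walk.edges_cons, Walk.edges_concat, Walk.edges_reverse, List.mem_cons,
        List.concat_eq_append, List.mem_append, List.mem_reverse, List.not_mem_nil, or_false] at he
      rcases he with rfl | he | rfl
      · exact a2
      · exact hc e he
      · exact b2
    · intro z
      simp only [Walk.support_cons, Walk.support_concat, Walk.support_reverse, List.mem_cons,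
        List.concat_eq_append, List.mem_append, List.mem_reverse, List.not_mem_nil, or_false, hs]
      by_cases h1 : z = x
      · subst h1; simp [hx]
      · by_cases h2 : z = y
        · subst h2; simp [hy]
        · simp [h1, h2]
    · intro _ he
      simp only [Walk.edges_cons, Walk.edges_concat, Walk.edges_reverse, List.mem_cons,
        List.concat_eq_append, List.mem_append, List.mem_reverse, List.not_mem_nil, or_false] at he
      have h1 : y' ≠ y := hy'.2
      have h2 : x' ≠ x := hx'.2
      rcases he with he | he | he
      · rw [Sym2.eq_iff] at he
        rcases he with ⟨-, he⟩ | ⟨he, -⟩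
        · exact h1 he.symm
        · exact a1.ne he
      · exact hxp (p.fst_mem_support_of_mem_edges he)
      · rw [Sym2.eq_iff] at he
        rcases he with ⟨he, -⟩ | ⟨he, -⟩
        · exact h2 he.symm
        · exact hxy he

theorem aux_both {V : Type*} [Fintype V] (G : SimpleGraph V) (c : Sym2 V → Bool) (b : Bool)
    (X Y : Set V) (hXY : X.ncard = Y.ncard)
    (h : ∀ x ∈ X, ∀ y ∈ Y, G.Adj x y ∧ c s(x, y) = b) :
    IsMonoPathSet G c b (X ∪ Y) ∧ IsMonoCycleSet G c b (X ∪ Y) := by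
  rcases Nat.eq_zero_or_pos X.ncard with h0 | h0
  · have hX : X = ∅ := (Set.ncard_eq_zero (Set.toFinite _)).1 h0
    have hY : Y = ∅ := (Set.ncard_eq_zero (Set.toFinite _)).1 (hXY ▸ h0)
    subst hX hY
    exact ⟨Or.inl (by simp), Or.inl (by simp)⟩
  obtain ⟨n, hn⟩ : ∃ n, X.ncard = n + 1 := ⟨X.ncard - 1, by omega⟩
  obtain ⟨x, hx⟩ : X.Nonempty := Set.nonempty_of_ncard_ne_zero (by omega)
  obtain ⟨y, hy⟩ : Y.Nonempty := Set.nonempty_of_ncard_ne_zero (by omega)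
  obtain ⟨p, hp, hc, hs, he⟩ := aux_path G c b n X Y hn (by omega) h x hx y hy
  have hS : X ∪ Y = {z | z ∈ p.support} := by ext z; exact (hs z).symm
  obtain ⟨h1, h2⟩ := h x hx y hy
  refine ⟨Or.inr ⟨x, y, p, hp, hc, hS⟩, Or.inr (Or.inr ?_)⟩
  by_cases hn0 : n = 0
  · subst hn0
    left
    obtain ⟨x', rfl⟩ := Set.ncard_eq_one.1 hn
    obtain ⟨y', rfl⟩ := Set.ncard_eq_one.1 (hXY ▸ hn)
    obtain rfl : x = x' := hx
    obtain rfl : y = y' := hy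
    exact ⟨x, y, h1, h2, by ext z; simp [or_comm]⟩
  · right
    refine ⟨y, Walk.cons h1.symm p, ?_, ?_, ?_⟩
    · rw [Walk.cons_isCycle_iff]
      exact ⟨hp, by rw [Sym2.eq_swap]; exact he hn0⟩
    · intro e hh
      rw [Walk.edges_cons, List.mem_cons] at hh
      rcases hh with rfl | hh
      · rw [Sym2.eq_swap]; exact h2
      · exact hc e hh
    · rw [hS]; ext z
      simp only [Set.mem_setOf_eq, Walk.support_cons, List.mem_cons]
      constructor
      · exact Or.inr
      · rintro (rfl | hz)
        · exact p.end_mem_support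
        · exact hz

theorem aux_main {V : Type*} [Fintype V] (G : SimpleGraph V) (c : Sym2 V → Bool) (b b' : Bool)
    (A B C D : Set V)
    (hABd : Disjoint A B) (hACd : Disjoint A C) (hADd : Disjoint A D) (hBCd : Disjoint B C)
    (hBDd : Disjoint B D) (hCDd : Disjoint C D) (hU : ∀ z, z ∈ A ∨ z ∈ B ∨ z ∈ C ∨ z ∈ D)
    (hAC : ∀ x ∈ A, ∀ y ∈ C, G.Adj x y ∧ c s(x, y) = b)
    (hBD : ∀ x ∈ B, ∀ y ∈ D, G.Adj x y ∧ c s(x, y) = b)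
    (hAD : ∀ x ∈ A, ∀ y ∈ D, G.Adj x y ∧ c s(x, y) = b')
    (hle : C.ncard ≤ A.ncard) (hsum : A.ncard + B.ncard = C.ncard + D.ncard) :
    (∃ S : Fin 3 → Set V, (∀ i, ∃ b, IsMonoPathSet G c b (S i)) ∧
      (∀ i j, i ≠ j → Disjoint (S i) (S j)) ∧ (⋃ i, S i) = Set.univ) ∧
    (∃ S : Fin 3 → Set V, (∀ i, ∃ b, IsMonoCycleSet G c b (S i)) ∧
      (∀ i j, i ≠ j → Disjoint (S i) (S j)) ∧ (⋃ i, S i) = Set.univ) := by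
  obtain ⟨A1, hA1, hA1c⟩ := Set.exists_subset_card_eq hle
  obtain ⟨D1, hD1, hD1c⟩ := Set.exists_subset_card_eq (show B.ncard ≤ D.ncard by omega)
  have e1 := Set.ncard_diff hA1 (Set.toFinite _)
  have e2 := Set.ncard_diff hD1 (Set.toFinite _)
  have k1 := aux_both G c b A1 C hA1c (fun x hx y hy => hAC x (hA1 hx) y hy)
  have k2 := aux_both G c b B D1 hD1c.symm (fun x hx y hy => hBD x hx y (hD1 hy))
  have k3 := aux_both G c b' (A \ A1) (D \ D1) (by omega)
    (fun x hx y hy => hAD x hx.1 y hy.1)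
  rw [Set.disjoint_left] at hABd hACd hADd hBCd hBDd hCDd
  have d12 : Disjoint (A1 ∪ C) (B ∪ D1) := by
    rw [Set.disjoint_left]; intro z
    have := @hABd z; have := @hADd z; have := @hBCd z; have := @hCDd z
    have := @hA1 z; have := @hD1 z
    simp only [Set.mem_union]; tauto
  have d13 : Disjoint (A1 ∪ C) (A \ A1 ∪ D \ D1) := by
    rw [Set.disjoint_left]; intro z
    have := @hACd z; have := @hADd z; have := @hCDd z
    have := @hA1 z; have := @hD1 z
    simp only [Set.mem_union, Set.mem_diff]; tauto
  have d23 : Disjoint (B ∪ D1) (A \ A1 ∪ D \ D1) := by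
    rw [Set.disjoint_left]; intro z
    have := @hABd z; have := @hADd z; have := @hBDd z
    have := @hA1 z; have := @hD1 z
    simp only [Set.mem_union, Set.mem_diff]; tauto
  have hdisj : ∀ i j : Fin 3, i ≠ j →
      Disjoint ((![A1 ∪ C, B ∪ D1, A \ A1 ∪ D \ D1] : Fin 3 → Set V) i)
        ((![A1 ∪ C, B ∪ D1, A \ A1 ∪ D \ D1] : Fin 3 → Set V) j) := by
    intro i j hij
    fin_cases i <;> fin_cases j <;> first
      | exact absurd rfl hij
      | exact d12
      | exact d13
      | exact d23
      | exact d12.symm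
      | exact d13.symm
      | exact d23.symm
  have huni : (⋃ i, (![A1 ∪ C, B ∪ D1, A \ A1 ∪ D \ D1] : Fin 3 → Set V) i) = Set.univ := by
    ext z
    have := hU z
    simp only [Set.mem_iUnion, Fin.exists_fin_succ, Set.mem_univ, iff_true]
    simp
    tauto
  refine ⟨⟨_, ?_, hdisj, huni⟩, ⟨_, ?_, hdisj, huni⟩⟩
  · intro i
    fin_cases i
    · exact ⟨b, k1.1⟩
    · exact ⟨b, k2.1⟩
    · exact ⟨b', k3.1⟩
  · intro i
    fin_cases i
    · exact ⟨b, k1.2⟩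
    · exact ⟨b, k2.2⟩
    · exact ⟨b', k3.2⟩

/-- The vertex set of a balanced complete bipartite graph with a proper split colouring
(both `||A|−|C|| ≥ 2` and `||B|−|D|| ≥ 2`) can be partitioned into the vertex sets of
three pairwise vertex-disjoint monochromatic paths, and also into the vertex sets of
three pairwise vertex-disjoint monochromatic cycles. -/
theorem stmt17 {V : Type*} [Fintype V]
    (f : V → Fin 2) (hf : Function.Surjective f)
    (G : SimpleGraph V) (hG : ∀ x y, G.Adj x y ↔ f x ≠ f y)
    (hbal : ({w | f w = 0} : Set V).ncard = ({w | f w = 1} : Set V).ncard)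
    (c : Sym2 V → Bool)
    (A B C D : Set V)
    (hAB : A ∪ B = {w | f w = 0}) (hABd : Disjoint A B)
    (hCD : C ∪ D = {w | f w = 1}) (hCDd : Disjoint C D)
    (hblue : ∀ u v, G.Adj u v →
      (((u ∈ A ∧ v ∈ C) ∨ (u ∈ C ∧ v ∈ A) ∨ (u ∈ B ∧ v ∈ D) ∨ (u ∈ D ∧ v ∈ B)) →
        c s(u, v) = false))
    (hred : ∀ u v, G.Adj u v →
      (((u ∈ A ∧ v ∈ D) ∨ (u ∈ D ∧ v ∈ A) ∨ (u ∈ B ∧ v ∈ C) ∨ (u ∈ C ∧ v ∈ B)) →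
        c s(u, v) = true))
    (hproperAC : 2 ≤ |(A.ncard : ℤ) - (C.ncard : ℤ)|)
    (hproperBD : 2 ≤ |(B.ncard : ℤ) - (D.ncard : ℤ)|) :
    (∃ S : Fin 3 → Set V, (∀ i, ∃ b, IsMonoPathSet G c b (S i)) ∧
      (∀ i j, i ≠ j → Disjoint (S i) (S j)) ∧ (⋃ i, S i) = Set.univ) ∧
    (∃ S : Fin 3 → Set V, (∀ i, ∃ b, IsMonoCycleSet G c b (S i)) ∧
      (∀ i j, i ≠ j → Disjoint (S i) (S j)) ∧ (⋃ i, S i) = Set.univ) := by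
  have fA : ∀ z ∈ A, f z = 0 := fun z hz => by
    have : z ∈ A ∪ B := Or.inl hz
    rwa [hAB] at this
  have fB : ∀ z ∈ B, f z = 0 := fun z hz => by
    have : z ∈ A ∪ B := Or.inr hz
    rwa [hAB] at this
  have fC : ∀ z ∈ C, f z = 1 := fun z hz => by
    have : z ∈ C ∪ D := Or.inl hz
    rwa [hCD] at this
  have fD : ∀ z ∈ D, f z = 1 := fun z hz => by
    have : z ∈ C ∪ D := Or.inr hz
    rwa [hCD] at this
  have key : ∀ X Y : Set V, (∀ z ∈ X, f z = 0) → (∀ z ∈ Y, f z = 1) → Disjoint X Y := by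
    intro X Y hX hY
    rw [Set.disjoint_left]
    intro z h1 h2
    have := (hX z h1).symm.trans (hY z h2)
    simp at this
  have adj : ∀ x y, f x = 0 → f y = 1 → G.Adj x y := by
    intro x y h1 h2
    rw [hG, h1, h2]; simp
  have hU : ∀ z, z ∈ A ∨ z ∈ B ∨ z ∈ C ∨ z ∈ D := by
    intro z
    have h01 : f z = 0 ∨ f z = 1 := by
      generalize f z = t
      fin_cases t <;> simp
    rcases h01 with h | h
    · have : z ∈ A ∪ B := by rw [hAB]; exact h
      rcases this with h | h <;> tauto
    · have : z ∈ C ∪ D := by rw [hCD]; exact h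
      rcases this with h | h <;> tauto
  have hsum : A.ncard + B.ncard = C.ncard + D.ncard := by
    rw [← Set.ncard_union_eq hABd (Set.toFinite _) (Set.toFinite _),
      ← Set.ncard_union_eq hCDd (Set.toFinite _) (Set.toFinite _), hAB, hCD, hbal]
  have AC : ∀ x ∈ A, ∀ y ∈ C, G.Adj x y ∧ c s(x, y) = false := fun x hx y hy =>
    have h := adj x y (fA x hx) (fC y hy)
    ⟨h, hblue x y h (by tauto)⟩
  have BD : ∀ x ∈ B, ∀ y ∈ D, G.Adj x y ∧ c s(x, y) = false := fun x hx y hy =>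
    have h := adj x y (fB x hx) (fD y hy)
    ⟨h, hblue x y h (by tauto)⟩
  have AD : ∀ x ∈ A, ∀ y ∈ D, G.Adj x y ∧ c s(x, y) = true := fun x hx y hy =>
    have h := adj x y (fA x hx) (fD y hy)
    ⟨h, hred x y h (by tauto)⟩
  have BC : ∀ x ∈ B, ∀ y ∈ C, G.Adj x y ∧ c s(x, y) = true := fun x hx y hy =>
    have h := adj x y (fB x hx) (fC y hy)
    ⟨h, hred x y h (by tauto)⟩
  rcases le_total C.ncard A.ncard with hle | hle
  · exact aux_main G c false true A B C D hABd (key A C fA fC) (key A D fA fD) (key B C fB fC)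
      (key B D fB fD) hCDd hU AC BD AD hle hsum
  · exact aux_main G c false true B A D C hABd.symm (key B D fB fD) (key B C fB fC)
      (key A D fA fD) (key A C fA fC) hCDd.symm (fun z => by have := hU z; tauto) BD AC BC
      (by omega) (by omega)
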